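/- For any two sets B, C ∈ 𝓘 there exists a set A ∈ 𝓘 such that B ⪯ A and C ⪯ A; that is, the collection 𝓘 is directed under the relation ⪯. -/

import Mathlib

/-- `A ∈ 𝓘`: `A` is a finite subset of `[0,1]`, linearly independent over `ℚ`, and
`1` is a strictly positive integer combination of the elements of `A`. -/
def MemI (A : Finset ℝ) : Prop :=
  (∀ a ∈ A, a ∈ Set.Icc (0 : ℝ) 1) ∧
  LinearIndependent ℚ (fun a : (A : Set ℝ) => (a : ℝ)) ∧
  ∃ z : ℝ → ℕ, (∀ a ∈ A, 0 < z a) ∧ (1 : ℝ) = ∑ a ∈ A, (z a : ℝ) * a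

/-- `B ⪯ A`: every element of `B` is a nonnegative integer combination of elements of `A`. -/
def Preceq (B A : Finset ℝ) : Prop :=
  ∀ b ∈ B, ∃ z : ℝ → ℕ, b = ∑ a ∈ A, (z a : ℝ) * a

lemma core_approx {ι : Type} [Fintype ι] (f : ι → ℝ) (hf : ∀ i, 0 < f i)
    (hli : LinearIndependent ℚ f) (S : Finset ℝ) (hS : ∀ s ∈ S, 0 < s)
    (q : ℝ → ι → ℚ) (hq : ∀ s ∈ S, s = ∑ i, (q s i : ℝ) * f i) :
    ∃ c : ι → ℝ, (∀ i, 0 < c i) ∧ LinearIndependent ℚ c ∧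
      ∃ w : ℝ → ι → ℚ, ∀ s ∈ S, (∀ j, 0 ≤ w s j) ∧ s = ∑ j, (w s j : ℝ) * c j := by
  classical
  have hev : ∀ᶠ p : (ι → ℝ) × ℝ in nhds (f, 0), ∀ s ∈ S, ∀ j,
      0 < ∑ i, (q s i : ℝ) * p.1 i + p.2 * (q s j : ℝ) := by
    rw [Filter.eventually_all_finset]
    intro s hs
    rw [Filter.eventually_all]
    intro j
    have hc : Continuous (fun p : (ι → ℝ) × ℝ =>
      ∑ i, (q s i : ℝ) * p.1 i + p.2 * (q s j : ℝ)) := by fun_prop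
    apply hc.continuousAt.eventually_const_lt
    simp only [zero_mul, add_zero]
    rw [← hq s hs]
    exact hS s hs
  obtain ⟨ε, hε, hball⟩ := Metric.eventually_nhds_iff.1 hev
  obtain ⟨t, ht0, htε⟩ := exists_rat_btwn hε
  set n : ℝ := (Fintype.card ι : ℝ) with hn
  have hn0 : 0 ≤ n := by positivity
  have hδ : 0 < min ε (t / (n + 1)) := lt_min hε (by positivity)
  have hr : ∀ i, ∃ r : ℚ, max 0 (f i - min ε (t / (n + 1))) < (r : ℝ) ∧ (r : ℝ) < f i := by
    intro i
    exact exists_rat_btwn (max_lt (hf i) (by linarith))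
  choose r hr1 hr2 using hr
  have hrpos : ∀ i, 0 < (r i : ℝ) := fun i => (le_max_left _ _).trans_lt (hr1 i)
  have hrlow : ∀ i, f i - min ε (t / (n + 1)) < r i := fun i => (le_max_right _ _).trans_lt (hr1 i)
  have hpos := @hball (fun i => (r i : ℝ), (t : ℝ)) (by
    rw [Prod.dist_eq]
    apply max_lt
    · rw [dist_pi_lt_iff hε]
      intro i
      have := hrlow i
      have := hr2 i
      have := min_le_left ε (t / (n + 1))
      rw [Real.dist_eq, abs_lt]
      constructor <;> linarith
    · simp only [dist_zero_right, Real.norm_eq_abs, abs_of_pos ht0]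
      exact htε)
  simp only at hpos
  set R : ℚ := ∑ i, r i with hR
  have hR0 : 0 ≤ R := Finset.sum_nonneg fun i _ => by exact_mod_cast (hrpos i).le
  have hR0' : (0 : ℝ) ≤ R := by exact_mod_cast hR0
  set F : ℝ := ∑ i, f i with hF
  have hRR : (R : ℝ) = ∑ i, (r i : ℝ) := by rw [hR]; push_cast; rfl
  have hF0 : 0 ≤ F := Finset.sum_nonneg fun i _ => (hf i).le
  have hFR : F ≤ t + R := by
    have h1 : F - R ≤ ∑ i : ι, (t / (n + 1) : ℝ) := by
      rw [hRR, hF, ← Finset.sum_sub_distrib]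
      apply Finset.sum_le_sum
      intro i _
      have := hrlow i
      have := min_le_right ε (t / (n + 1))
      linarith
    rw [Finset.sum_const, Finset.card_univ, nsmul_eq_mul, ← hn] at h1
    have h2 : n * (t / (n + 1)) ≤ t := by
      rw [← mul_div_assoc, div_le_iff₀ (by positivity)]
      nlinarith
    linarith
  have htR : (0 : ℝ) < t + R := by linarith
  set σ : ℝ := F / (t + R) with hσ
  have hσ0 : 0 ≤ σ := by positivity
  have hσ1 : σ ≤ 1 := by rw [hσ, div_le_one htR]; exact hFR
  let c : ι → ℝ := fun j => (f j - σ * r j) / t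
  have hcsum : ∑ j, c j = σ := by
    simp only [c]
    rw [← Finset.sum_div, Finset.sum_sub_distrib, ← Finset.mul_sum, ← hRR, ← hF,
      div_eq_iff ht0.ne', hσ]
    field_simp
    ring
  have hfc : ∀ i, f i = (∑ j, c j) * r i + t * c i := by
    intro i
    rw [hcsum]
    simp only [c]
    field_simp
    ring
  refine ⟨c, ?_, ?_, fun s j => ∑ i, q s i * r i + t * q s j, ?_⟩
  · intro i
    apply div_pos _ ht0
    have := hrpos i
    have := hr2 i
    nlinarith
  · rw [linearIndependent_iff_card_le_finrank_span]
    rw [linearIndependent_iff_card_eq_finrank_span] at hli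
    rw [hli]
    have := FiniteDimensional.span_of_finite ℚ (Set.finite_range c)
    apply Submodule.finrank_mono
    rw [Submodule.span_le]
    rintro _ ⟨i, rfl⟩
    have : f i = r i • (∑ j, c j) + t • c i := by
      rw [hfc i, Rat.smul_def, Rat.smul_def]; ring
    rw [this]
    exact Submodule.add_mem _ (Submodule.smul_mem _ _ (Submodule.sum_mem _ fun j _ =>
      Submodule.subset_span ⟨j, rfl⟩)) (Submodule.smul_mem _ _ (Submodule.subset_span ⟨i, rfl⟩))
  · intro s hs
    constructor
    · intro j
      have := hpos s hs j
      exact_mod_cast this.le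
    · push_cast
      conv_lhs => rw [hq s hs]
      simp only [add_mul, Finset.sum_add_distrib, ← Finset.mul_sum]
      have h : ∑ i, (q s i : ℝ) * f i = ∑ i, (q s i : ℝ) * ((∑ j, c j) * r i + t * c i) :=
        Finset.sum_congr rfl fun i _ => by rw [← hfc i]
      rw [h]
      simp only [mul_add, Finset.sum_add_distrib]
      congr 1
      · rw [Finset.sum_mul]
        exact Finset.sum_congr rfl fun i _ => by ring
      · exact Finset.sum_congr rfl fun i _ => by ring

lemma core_nat (S : Finset ℝ) (hS : ∀ s ∈ S, 0 < s) :
    ∃ A : Finset ℝ, (∀ a ∈ A, 0 < a) ∧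
      LinearIndependent ℚ (fun a : (A : Set ℝ) => (a : ℝ)) ∧
      ∀ s ∈ S, ∃ z : ℝ → ℕ, s = ∑ a ∈ A, (z a : ℝ) * a := by
  classical
  obtain ⟨b, hbS, hspan, hbli⟩ := exists_linearIndependent ℚ (S : Set ℝ)
  have hbfin : b.Finite := S.finite_toSet.subset hbS
  let _ : Fintype b := hbfin.fintype
  have hq : ∀ s : ℝ, ∃ q : b → ℚ, s ∈ S → s = ∑ i, (q i : ℝ) * (i : ℝ) := by
    intro s
    by_cases hs : s ∈ S
    · have : s ∈ Submodule.span ℚ (Set.range ((↑) : b → ℝ)) := by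
        rw [Subtype.range_coe, hspan]
        exact Submodule.subset_span hs
      obtain ⟨q, hq⟩ := (Submodule.mem_span_range_iff_exists_fun ℚ).1 this
      refine ⟨q, fun _ => ?_⟩
      rw [← hq]
      exact Finset.sum_congr rfl fun i _ => by rw [Rat.smul_def]
    · exact ⟨0, fun h => absurd h hs⟩
  choose q hq using hq
  obtain ⟨c, hc0, hcli, w, hw⟩ := core_approx (fun i : b => (i : ℝ))
    (fun i => hS i (hbS i.2)) hbli S hS q hq
  let D : ℕ := ∏ s ∈ S, ∏ j, (w s j).den
  have hD0 : D ≠ 0 := Finset.prod_ne_zero_iff.2 fun s _ =>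
    Finset.prod_ne_zero_iff.2 fun j _ => (w s j).den_ne_zero
  have hD : ∀ s ∈ S, ∀ j, ∃ m : ℕ, (m : ℚ) = D * w s j := by
    intro s hs j
    obtain ⟨k, hk⟩ : (w s j).den ∣ D :=
      (Finset.dvd_prod_of_mem (fun j => (w s j).den) (Finset.mem_univ j)).trans
        (Finset.dvd_prod_of_mem (fun s => ∏ j, (w s j).den) hs)
    refine ⟨k * (w s j).num.toNat, ?_⟩
    have h1 : (((w s j).num.toNat : ℤ)) = (w s j).num :=
      Int.toNat_of_nonneg (Rat.num_nonneg.2 ((hw s hs).1 j))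
    have h2 : (((w s j).num.toNat : ℕ) : ℚ) = (w s j).num := by exact_mod_cast h1
    rw [hk]
    push_cast
    rw [h2, ← Rat.mul_den_eq_num]
    ring
  have hDq : (D : ℚ)⁻¹ ≠ 0 := by simpa using hD0
  have hdli : LinearIndependent ℚ (fun j => (D : ℚ)⁻¹ • c j) :=
    hcli.units_smul (fun _ => Units.mk0 _ hDq)
  have hinj := hdli.injective
  have hDr : (D : ℝ) ≠ 0 := by exact_mod_cast hD0
  refine ⟨Finset.univ.image (fun j => (D : ℚ)⁻¹ • c j), ?_, ?_, ?_⟩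
  · intro a ha
    obtain ⟨j, -, rfl⟩ := Finset.mem_image.1 ha
    rw [Rat.smul_def]
    have := hc0 j
    push_cast
    positivity
  · have := hdli.linearIndepOn_id
    rw [Finset.coe_image, Finset.coe_univ, Set.image_univ]
    exact this
  · intro s hs
    choose m hm using hD s hs
    refine ⟨fun x => if h : ∃ j, (D : ℚ)⁻¹ • c j = x then m h.choose else 0, ?_⟩
    rw [Finset.sum_image (fun i _ j _ h => hinj h)]
    conv_lhs => rw [(hw s hs).2]
    refine Finset.sum_congr rfl fun j _ => ?_
    have hex : ∃ i, (D : ℚ)⁻¹ • c i = (D : ℚ)⁻¹ • c j := ⟨j, rfl⟩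
    have : hex.choose = j := hinj hex.choose_spec
    beta_reduce
    rw [dif_pos hex, this, Rat.smul_def]
    have h3 : (m j : ℝ) = D * (w s j : ℝ) := by exact_mod_cast congrArg (Rat.cast (K := ℝ)) (hm j)
    rw [h3]
    push_cast
    field_simp

lemma comb_of_comb (A B : Finset ℝ) (u : ℝ → ℝ → ℕ)
    (hu : ∀ b ∈ B, b = ∑ a ∈ A, (u b a : ℝ) * a) (z : ℝ → ℕ)
    (hz : (1 : ℝ) = ∑ b ∈ B, (z b : ℝ) * b) :
    (1 : ℝ) = ∑ a ∈ A, ((∑ b ∈ B, z b * u b a : ℕ) : ℝ) * a := by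
  have h : ∑ b ∈ B, (z b : ℝ) * b = ∑ b ∈ B, ∑ a ∈ A, (z b : ℝ) * ((u b a : ℝ) * a) :=
    Finset.sum_congr rfl fun b hb => by rw [← Finset.mul_sum, ← hu b hb]
  rw [hz, h, Finset.sum_comm]
  refine Finset.sum_congr rfl fun a _ => ?_
  push_cast
  rw [Finset.sum_mul]
  exact Finset.sum_congr rfl fun b _ => by ring

lemma coef_unique (A : Finset ℝ) (hA : LinearIndependent ℚ (fun a : (A : Set ℝ) => (a : ℝ)))
    (x y : ℝ → ℕ) (h : ∑ a ∈ A, (x a : ℝ) * a = ∑ a ∈ A, (y a : ℝ) * a) :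
    ∀ a ∈ A, x a = y a := by
  have h0 := linearIndepOn_finset_iff.1 (show LinearIndepOn ℚ (fun a : ℝ => a) (A : Set ℝ) from hA)
    (fun a => (x a : ℚ) - y a) (by
      simp only [sub_smul, Finset.sum_sub_distrib, Rat.smul_def, Rat.cast_natCast]
      rw [h, sub_self])
  intro a ha
  have := h0 a ha
  have h2 : (x a : ℚ) = y a := by linarith
  exact_mod_cast h2

lemma preceq_filter (A B : Finset ℝ) (hA : LinearIndependent ℚ (fun a : (A : Set ℝ) => (a : ℝ)))
    (hB : ∀ b ∈ B, ∃ z : ℝ → ℕ, b = ∑ a ∈ A, (z a : ℝ) * a)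
    (z : ℝ → ℕ) (hz0 : ∀ b ∈ B, 0 < z b) (hz : (1 : ℝ) = ∑ b ∈ B, (z b : ℝ) * b)
    (y : ℝ → ℕ) (hy : (1 : ℝ) = ∑ a ∈ A, (y a : ℝ) * a) :
    Preceq B (A.filter fun a => y a ≠ 0) := by
  intro b hb
  choose! u hu using hB
  have heq := coef_unique A hA _ _ (hy.symm.trans (comb_of_comb A B u hu z hz))
  refine ⟨u b, ?_⟩
  conv_lhs => rw [hu b hb]
  symm
  apply Finset.sum_filter_of_ne
  intro a ha hne hya
  rw [heq a ha] at hya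
  have h1 := (Finset.sum_eq_zero_iff.1 hya) b hb
  have h2 := hz0 b hb
  have h3 : u b a = 0 := by
    rcases Nat.mul_eq_zero.1 h1 with h | h
    · omega
    · exact h
  exact hne (by rw [h3]; simp)

lemma memI_pos (B : Finset ℝ) (hB : MemI B) : ∀ b ∈ B, 0 < b := by
  intro b hb
  have h := hB.2.1.ne_zero ⟨b, hb⟩
  exact lt_of_le_of_ne (hB.1 b hb).1 (Ne.symm h)

/-- For any two sets B, C ∈ 𝓘 there exists A ∈ 𝓘 with B ⪯ A and C ⪯ A;
that is, 𝓘 is directed under ⪯. -/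
theorem stmt_2 (B C : Finset ℝ) (hB : MemI B) (hC : MemI C) :
    ∃ A : Finset ℝ, MemI A ∧ Preceq B A ∧ Preceq C A := by
  classical
  obtain ⟨A, hA0, hAli, hA⟩ := core_nat (B ∪ C) (by
    intro s hs
    rcases Finset.mem_union.1 hs with h | h
    · exact memI_pos B hB s h
    · exact memI_pos C hC s h)
  have hAB := fun b (hb : b ∈ B) => hA b (Finset.mem_union_left _ hb)
  have hAC := fun b (hb : b ∈ C) => hA b (Finset.mem_union_right _ hb)
  obtain ⟨-, -, zB, hzB0, hzB⟩ := hB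
  obtain ⟨-, -, zC, hzC0, hzC⟩ := hC
  obtain ⟨y, hy⟩ : ∃ y : ℝ → ℕ, (1 : ℝ) = ∑ a ∈ A, (y a : ℝ) * a := by
    choose! u hu using hAB
    exact ⟨_, comb_of_comb A B u hu zB hzB⟩
  refine ⟨A.filter fun a => y a ≠ 0, ⟨?_, ?_, y, ?_, ?_⟩,
    preceq_filter A B hAli hAB zB hzB0 hzB y hy, preceq_filter A C hAli hAC zC hzC0 hzC y hy⟩
  · intro a ha
    obtain ⟨haA, hya⟩ := Finset.mem_filter.1 ha
    refine ⟨(hA0 a haA).le, ?_⟩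
    have h1 : (y a : ℝ) * a ≤ 1 := by
      rw [hy]
      exact Finset.single_le_sum (f := fun a => (y a : ℝ) * a)
        (fun i hi => mul_nonneg (Nat.cast_nonneg _) (hA0 i hi).le) haA
    have h2 : (1 : ℝ) ≤ y a := by exact_mod_cast Nat.one_le_iff_ne_zero.2 hya
    nlinarith [hA0 a haA]
  · exact LinearIndepOn.mono (show LinearIndepOn ℚ (fun a : ℝ => a) (A : Set ℝ) from hAli)
      (Finset.coe_subset.2 (Finset.filter_subset _ _))
  · intro a ha
    exact Nat.pos_of_ne_zero (Finset.mem_filter.1 ha).2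
  · rw [Finset.sum_filter_of_ne]
    · exact hy
    · intro a _ hne h
      exact hne (by rw [h]; simp)
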